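/- Let f be a Holland map in Hol(γ,ρ) with γ < 1, with inverse branch v_0, points z_n and intervals J_n. There exists a constant C ≥ 1 such that for all n ≥ 0, k ≥ 1 and all x ∈ J_k, (1/C) · λ(J_{n+k})/λ(J_k) ≤ (v_0^n)'(x) ≤ C · λ(J_{n+k})/λ(J_k), where λ denotes Lebesgue measure and v_0^n is the n-th iterate of v_0. -/

import Mathlib

open MeasureTheory Filter Set Topology

structure IsHolland (γ : ℝ) (ρ : ℝ → ℝ) (f : ℝ → ℝ) : Prop where
  gamma_pos : 0 < γ
  rho_pos : ∀ x ∈ Set.Ioo (0:ℝ) 1, 0 < ρ x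
  maps_to : ∀ x ∈ Set.Icc (0:ℝ) 1, f x ∈ Set.Icc (0:ℝ) 1
  eq_left : ∀ x ∈ Set.Icc (0:ℝ) (1/2), f x = x * (1 + x ^ γ * ρ x)
  eq_right : ∀ x ∈ Set.Ioc (1/2:ℝ) 1, f x = 2 * x - 1
  smooth : ContDiffOn ℝ 2 ρ (Set.Ioo 0 1)
  slowly_zero : ∀ l : ℝ, 0 < l →
    Tendsto (fun x => ρ (l * x) / ρ x) (nhdsWithin 0 (Set.Ioi 0)) (nhds 1)
  deriv_small : Tendsto (fun x => x * deriv ρ x / ρ x) (nhdsWithin 0 (Set.Ioi 0)) (nhds 0)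
  deriv2_small : Tendsto (fun x => x ^ 2 * deriv (deriv ρ) x / ρ x)
    (nhdsWithin 0 (Set.Ioi 0)) (nhds 0)
  rho_zero : Tendsto ρ (nhdsWithin 0 (Set.Ioi 0)) (nhds 0)
  half : f (1/2) = 1
  expanding : ∀ x ∈ Set.Ioo (0:ℝ) 1, x ≠ 1/2 → 1 < deriv f x

/-!
The distortion bound is Denjoy's argument. On a fundamental interval `[v c, c]` of an increasing map
`v`, the function `log (v^n)'` is the sum of `log v' ∘ v^i` over `i < n`, and the intervals
`v^i [v c, c] = [v^(i+1) c, v^i c]` do not overlap. Hence the oscillation of `log (v^n)'` on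
`[v c, c]` is at most the total variation of `log v'`, uniformly in `n` and `c`, and the mean value
theorem replaces `(v^n)'` by a ratio of lengths.

For the inverse branch `v` of a Holland map this total variation is finite: `log v' = -(log f') ∘ v`
with `v` monotone, while on `(0, 1/2)` one has `f' > 1` and `f''(x) = x^(γ-1) σ(x)` with `σ`
bounded, so that `(log f')'` is dominated by a multiple of the integrable function `x^(γ-1)`.
-/

section BoundedVariation

variable {α E F : Type*} [LinearOrder α]

theorem eVariationOn_le_of_edist_le [PseudoEMetricSpace E] [PseudoEMetricSpace F]
    {g : α → E} {φ : α → F} {s : Set α}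
    (h : ∀ x ∈ s, ∀ y ∈ s, x ≤ y → edist (g y) (g x) ≤ edist (φ y) (φ x)) :
    eVariationOn g s ≤ eVariationOn φ s :=
  iSup_mono fun p => Finset.sum_le_sum fun i _ =>
    h _ (p.2.2.2 i) _ (p.2.2.2 (i + 1)) (p.2.2.1 i.le_succ)

theorem norm_sub_le_sub_of_norm_deriv_le [NormedAddCommGroup E] [NormedSpace ℝ E]
    {g g' : ℝ → E} {φ φ' : ℝ → ℝ} {a b : ℝ} (hab : a ≤ b)
    (hg : ∀ x ∈ Icc a b, HasDerivAt g (g' x) x) (hφ : ∀ x ∈ Icc a b, HasDerivAt φ (φ' x) x)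
    (hle : ∀ x ∈ Icc a b, ‖g' x‖ ≤ φ' x) : ‖g b - g a‖ ≤ φ b - φ a :=
  image_norm_le_of_norm_deriv_right_le_deriv_boundary' (f := fun x => g x - g a)
    (B := fun x => φ x - φ a)
    (fun x hx => ((hg x hx).sub_const _).continuousAt.continuousWithinAt)
    (fun x hx => ((hg x (Ico_subset_Icc_self hx)).sub_const _).hasDerivWithinAt)
    (by simp)
    (fun x hx => ((hφ x hx).sub_const _).continuousAt.continuousWithinAt)
    (fun x hx => ((hφ x (Ico_subset_Icc_self hx)).sub_const _).hasDerivWithinAt)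
    (fun x hx => hle x (Ico_subset_Icc_self hx)) (right_mem_Icc.2 hab)

theorem boundedVariationOn_of_norm_deriv_le [NormedAddCommGroup E] [NormedSpace ℝ E]
    {g g' : ℝ → E} {φ φ' : ℝ → ℝ} {s : Set ℝ} {B : ℝ} (hs : s.OrdConnected)
    (hB : ∀ x ∈ s, |φ x| ≤ B) (hg : ∀ x ∈ s, HasDerivAt g (g' x) x)
    (hφ : ∀ x ∈ s, HasDerivAt φ (φ' x) x) (hle : ∀ x ∈ s, ‖g' x‖ ≤ φ' x) :
    BoundedVariationOn g s := by
  have hsub {x y : ℝ} (hx : x ∈ s) (hy : y ∈ s) (hxy : x ≤ y) : ‖g y - g x‖ ≤ φ y - φ x :=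
    norm_sub_le_sub_of_norm_deriv_le hxy (fun t ht => hg t (hs.out hx hy ht))
      (fun t ht => hφ t (hs.out hx hy ht)) fun t ht => hle t (hs.out hx hy ht)
  have hmono : MonotoneOn φ s := fun x hx y hy hxy =>
    sub_nonneg.1 ((norm_nonneg _).trans (hsub hx hy hxy))
  refine ne_top_of_le_ne_top (hmono.boundedVariationOn hB)
    (eVariationOn_le_of_edist_le fun x hx y hy hxy => ?_)
  rw [edist_dist, edist_dist, dist_eq_norm, Real.dist_eq]
  exact ENNReal.ofReal_le_ofReal ((hsub hx hy hxy).trans (le_abs_self _))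

theorem boundedVariationOn_of_norm_deriv_le_mul_rpow [NormedAddCommGroup E] [NormedSpace ℝ E]
    {g g' : ℝ → E} {γ M b : ℝ} (hγ : 0 < γ) (hg : ∀ x ∈ Ioo 0 b, HasDerivAt g (g' x) x)
    (hle : ∀ x ∈ Ioo 0 b, ‖g' x‖ ≤ M * x ^ (γ - 1)) : BoundedVariationOn g (Ioo 0 b) := by
  refine boundedVariationOn_of_norm_deriv_le (φ := fun x => M / γ * x ^ γ) (B := |M / γ| * b ^ γ)
    ordConnected_Ioo (fun x hx => ?_) hg (fun x hx => ?_) hle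
  · rw [abs_mul, abs_of_nonneg (Real.rpow_nonneg hx.1.le γ)]
    exact mul_le_mul_of_nonneg_left (Real.rpow_le_rpow hx.1.le hx.2.le hγ.le) (abs_nonneg _)
  · have h := (Real.hasDerivAt_rpow_const (p := γ) (Or.inl hx.1.ne')).const_mul (M / γ)
    rwa [← mul_assoc, div_mul_cancel₀ M hγ.ne'] at h

end BoundedVariation

theorem exists_norm_le_of_continuousOn_Ioo {E : Type*} [NormedAddCommGroup E] {g : ℝ → E}
    {a b : ℝ} {la lb : E} (hg : ContinuousOn g (Ioo a b)) (ha : Tendsto g (𝓝[>] a) (𝓝 la))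
    (hb : Tendsto g (𝓝[<] b) (𝓝 lb)) : ∃ M, ∀ x ∈ Ioo a b, ‖g x‖ ≤ M := by
  obtain ⟨M, hM⟩ := isCompact_Icc.exists_bound_of_continuousOn
    (continuousOn_Icc_extendFrom_Ioo hg ha hb)
  exact ⟨M, fun x hx => extendFrom_extends hg x hx ▸ hM x (Ioo_subset_Icc_self hx)⟩

section Iterate

theorem differentiableAt_iterate_of_mapsTo {𝕜 E : Type*} [NontriviallyNormedField 𝕜]
    [NormedAddCommGroup E] [NormedSpace 𝕜 E] {v : E → E} {s : Set E} (hmaps : MapsTo v s s)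
    (hv : ∀ x ∈ s, DifferentiableAt 𝕜 v x) {x : E} (hx : x ∈ s) (n : ℕ) :
    DifferentiableAt 𝕜 v^[n] x := by
  induction n with
  | zero => exact differentiableAt_id
  | succ n ih =>
    rw [Function.iterate_succ']
    exact (hv _ (hmaps.iterate n hx)).comp x ih

theorem deriv_iterate_succ_of_mapsTo {𝕜 : Type*} [NontriviallyNormedField 𝕜] {v : 𝕜 → 𝕜}
    {s : Set 𝕜} (hmaps : MapsTo v s s) (hv : ∀ x ∈ s, DifferentiableAt 𝕜 v x) {x : 𝕜}
    (hx : x ∈ s) (n : ℕ) : deriv v^[n + 1] x = deriv v (v^[n] x) * deriv v^[n] x := by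
  rw [Function.iterate_succ']
  exact deriv_comp x (hv _ (hmaps.iterate n hx)) (differentiableAt_iterate_of_mapsTo hmaps hv hx n)

theorem iterate_mem_Icc_of_monotoneOn {α : Type*} [Preorder α] {v : α → α} {s : Set α}
    (hmaps : MapsTo v s s) (hmono : MonotoneOn v s) {c x : α} (hc : c ∈ s) (hxs : x ∈ s)
    (hx : x ∈ Icc (v c) c) (n : ℕ) : v^[n] x ∈ Icc (v^[n + 1] c) (v^[n] c) := by
  induction n with
  | zero => exact hx
  | succ n ih =>
    simp only [Function.iterate_succ_apply'] at ih ⊢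
    have hn := fun {y} (hy : y ∈ s) => hmaps.iterate n hy
    exact ⟨hmono (hmaps (hn hc)) (hn hxs) ih.1, hmono (hn hxs) (hn hc) ih.2⟩

theorem iterate_apply_of_rec {α : Type*} {v : α → α} {z : ℕ → α}
    (hz : ∀ n : ℕ, 1 ≤ n → z (n + 1) = v (z n)) {k : ℕ} (hk : 1 ≤ k) (n : ℕ) :
    v^[n] (z k) = z (n + k) := by
  induction n with
  | zero => simp
  | succ n ih => rw [Function.iterate_succ_apply', ih, ← hz _ (by omega), Nat.add_right_comm]

end Iterate

section Distortion

variable {v : ℝ → ℝ} {s : Set ℝ}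

theorem deriv_iterate_pos (hmaps : MapsTo v s s) (hpos : ∀ x ∈ s, 0 < deriv v x) {x : ℝ}
    (hx : x ∈ s) (n : ℕ) : 0 < deriv v^[n] x := by
  have hdiff : ∀ t ∈ s, DifferentiableAt ℝ v t := fun t ht =>
    differentiableAt_of_deriv_ne_zero (hpos t ht).ne'
  induction n with
  | zero => simp
  | succ n ih =>
    rw [deriv_iterate_succ_of_mapsTo hmaps hdiff hx]
    exact mul_pos (hpos _ (hmaps.iterate n hx)) ih

theorem strictMonoOn_of_deriv_pos_of_ordConnected (hs : s.OrdConnected)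
    (hpos : ∀ x ∈ s, 0 < deriv v x) : StrictMonoOn v s :=
  strictMonoOn_of_deriv_pos hs.convex
    (fun x hx =>
      (differentiableAt_of_deriv_ne_zero (hpos x hx).ne').continuousAt.continuousWithinAt)
    fun x hx => hpos x (interior_subset hx)

theorem edist_log_deriv_iterate_le (hs : s.OrdConnected) (hmaps : MapsTo v s s)
    (hpos : ∀ x ∈ s, 0 < deriv v x) {c x y : ℝ} (hc : c ∈ s) (hx : x ∈ Icc (v c) c)
    (hy : y ∈ Icc (v c) c) (n : ℕ) :
    edist (Real.log (deriv v^[n] x)) (Real.log (deriv v^[n] y)) ≤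
      eVariationOn (fun t => Real.log (deriv v t)) (Icc (v^[n] c) c) := by
  have hdiff : ∀ t ∈ s, DifferentiableAt ℝ v t := fun t ht =>
    differentiableAt_of_deriv_ne_zero (hpos t ht).ne'
  have hmono : MonotoneOn v s := (strictMonoOn_of_deriv_pos_of_ordConnected hs hpos).monotoneOn
  have hsub : Icc (v c) c ⊆ s := hs.out (hmaps hc) hc
  have horbit {t : ℝ} (ht : t ∈ Icc (v c) c) := iterate_mem_Icc_of_monotoneOn hmaps hmono hc
    (hsub ht) ht
  have hlog {t : ℝ} (ht : t ∈ Icc (v c) c) (n : ℕ) : Real.log (deriv v^[n + 1] t) =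
      Real.log (deriv v (v^[n] t)) + Real.log (deriv v^[n] t) := by
    rw [deriv_iterate_succ_of_mapsTo hmaps hdiff (hsub ht), Real.log_mul
      (hpos _ (hmaps.iterate n (hsub ht))).ne' (deriv_iterate_pos hmaps hpos (hsub ht) n).ne']
  have hle (n : ℕ) : v^[n] c ≤ c := by
    induction n with
    | zero => rfl
    | succ n ih => exact ((horbit hx n).1.trans (horbit hx n).2).trans ih
  induction n with
  | zero => simp
  | succ n ih =>
    have hsplit := eVariationOn.Icc_add_Icc (fun t => Real.log (deriv v t)) (s := univ)
      ((horbit hx n).1.trans (horbit hx n).2) (hle n) (mem_univ _)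
    simp only [univ_inter] at hsplit
    rw [hlog hx, hlog hy, ← hsplit]
    exact (edist_add_add_le _ _ _ _).trans
      (add_le_add (eVariationOn.edist_le _ (horbit hx n) (horbit hy n)) ih)

theorem deriv_iterate_le_exp_mul (hs : s.OrdConnected) (hmaps : MapsTo v s s)
    (hpos : ∀ x ∈ s, 0 < deriv v x)
    (hvar : BoundedVariationOn (fun t => Real.log (deriv v t)) s) {c x y : ℝ} (hc : c ∈ s)
    (hx : x ∈ Icc (v c) c) (hy : y ∈ Icc (v c) c) (n : ℕ) :
    deriv v^[n] x ≤
      Real.exp (eVariationOn (fun t => Real.log (deriv v t)) s).toReal * deriv v^[n] y := by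
  have hsub : Icc (v c) c ⊆ s := hs.out (hmaps hc) hc
  have hpos_iter {t : ℝ} (ht : t ∈ Icc (v c) c) := deriv_iterate_pos hmaps hpos (hsub ht) n
  have hdist : dist (Real.log (deriv v^[n] x)) (Real.log (deriv v^[n] y)) ≤
      (eVariationOn (fun t => Real.log (deriv v t)) s).toReal := by
    rw [dist_edist]
    exact ENNReal.toReal_mono hvar ((edist_log_deriv_iterate_le hs hmaps hpos hc hx hy n).trans
      (eVariationOn.mono _ (hs.out (hmaps.iterate n hc) hc)))
  rw [← Real.log_le_log_iff (hpos_iter hx) (mul_pos (Real.exp_pos _) (hpos_iter hy)),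
    Real.log_mul (Real.exp_ne_zero _) (hpos_iter hy).ne', Real.log_exp, ← sub_le_iff_le_add]
  exact (le_abs_self _).trans hdist

theorem slope_bounds_of_deriv_le_mul_deriv {g : ℝ → ℝ} {a b C : ℝ} (hab : a < b) (hC : 0 < C)
    (hg : ∀ x ∈ Icc a b, DifferentiableAt ℝ g x)
    (hdist : ∀ x ∈ Icc a b, ∀ y ∈ Icc a b, deriv g x ≤ C * deriv g y) {x : ℝ}
    (hx : x ∈ Icc a b) :
    C⁻¹ * ((g b - g a) / (b - a)) ≤ deriv g x ∧ deriv g x ≤ C * ((g b - g a) / (b - a)) := by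
  obtain ⟨ξ, hξ, hslope⟩ := exists_deriv_eq_slope g hab
    (fun t ht => (hg t ht).continuousAt.continuousWithinAt)
    (fun t ht => (hg t (Ioo_subset_Icc_self ht)).differentiableWithinAt)
  rw [← hslope, inv_mul_le_iff₀ hC]
  exact ⟨hdist ξ (Ioo_subset_Icc_self hξ) x hx, hdist x hx ξ (Ioo_subset_Icc_self hξ)⟩

theorem exists_distortion_const (hs : s.OrdConnected) (hmaps : MapsTo v s s)
    (hpos : ∀ x ∈ s, 0 < deriv v x)
    (hvar : BoundedVariationOn (fun t => Real.log (deriv v t)) s) :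
    ∃ C : ℝ, 1 ≤ C ∧ ∀ c ∈ s, v c < c → ∀ n : ℕ, ∀ x ∈ Icc (v c) c,
      C⁻¹ * ((v^[n] c - v^[n + 1] c) / (c - v c)) ≤ deriv v^[n] x ∧
        deriv v^[n] x ≤ C * ((v^[n] c - v^[n + 1] c) / (c - v c)) := by
  refine ⟨Real.exp (eVariationOn (fun t => Real.log (deriv v t)) s).toReal,
    Real.one_le_exp ENNReal.toReal_nonneg, fun c hc hlt n x hx => ?_⟩
  have hsub : Icc (v c) c ⊆ s := hs.out (hmaps hc) hc
  exact slope_bounds_of_deriv_le_mul_deriv hlt (Real.exp_pos _)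
    (fun t ht => differentiableAt_of_deriv_ne_zero
      (deriv_iterate_pos hmaps hpos (hsub ht) n).ne')
    (fun _ hx _ hy => deriv_iterate_le_exp_mul hs hmaps hpos hvar hc hx hy n) hx

end Distortion

section InverseBranch

theorem strictMonoOn_of_leftInvOn {α β : Type*} [LinearOrder α] [Preorder β] {f : α → β}
    {v : β → α} {s : Set α} {t : Set β} (hf : StrictMonoOn f s) (hv : MapsTo v t s)
    (hfv : LeftInvOn f v t) : StrictMonoOn v t := fun x hx y hy hxy =>
  (hf.lt_iff_lt (hv hx) (hv hy)).1 (by rwa [hfv hx, hfv hy])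

variable {f v : ℝ → ℝ} {s t : Set ℝ}

theorem hasDerivAt_of_leftInvOn (hs : IsOpen s) (hsc : s.OrdConnected) (ht : IsOpen t)
    (hpos : ∀ x ∈ s, 0 < deriv f x) (hv : MapsTo v t s) (hfv : LeftInvOn f v t) {x : ℝ}
    (hx : x ∈ t) : HasDerivAt v (deriv f (v x))⁻¹ x := by
  have hf : StrictMonoOn f s := strictMonoOn_of_deriv_pos_of_ordConnected hsc hpos
  have hfx : DifferentiableAt ℝ f (v x) :=
    differentiableAt_of_deriv_ne_zero (hpos _ (hv hx)).ne'
  have himage : v '' t ∈ 𝓝 (v x) := by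
    have hft : f ⁻¹' t ∈ 𝓝 (v x) :=
      hfx.continuousAt.preimage_mem_nhds (ht.mem_nhds ((hfv hx).symm ▸ hx))
    filter_upwards [hft, hs.mem_nhds (hv hx)] with u hut hus
    exact ⟨f u, hut, hf.injOn (hv hut) hus (hfv hut)⟩
  have hcont : ContinuousAt v x :=
    (strictMonoOn_of_leftInvOn hf hv hfv).continuousAt_of_image_mem_nhds (ht.mem_nhds hx) himage
  exact hfx.hasDerivAt.of_local_left_inverse hcont (hpos _ (hv hx)).ne'
    (eventually_of_mem (ht.mem_nhds hx) fun y hy => hfv hy)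

theorem boundedVariationOn_log_deriv_of_leftInvOn (hs : IsOpen s) (hsc : s.OrdConnected)
    (ht : IsOpen t) (hpos : ∀ x ∈ s, 0 < deriv f x) (hv : MapsTo v t s) (hfv : LeftInvOn f v t)
    (hvar : BoundedVariationOn (fun x => Real.log (deriv f x)) s) :
    BoundedVariationOn (fun x => Real.log (deriv v x)) t := by
  have hmono : MonotoneOn v t := (strictMonoOn_of_leftInvOn
    (strictMonoOn_of_deriv_pos_of_ordConnected hsc hpos) hv hfv).monotoneOn
  refine ne_top_of_le_ne_top hvar (le_trans (eVariationOn_le_of_edist_le fun x hx y hy _ => ?_)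
    (eVariationOn.comp_le_of_monotoneOn _ v hmono hv))
  simp only [(hasDerivAt_of_leftInvOn hs hsc ht hpos hv hfv hx).deriv,
    (hasDerivAt_of_leftInvOn hs hsc ht hpos hv hfv hy).deriv, Real.log_inv, edist_neg_neg,
    Function.comp_apply, le_refl]

end InverseBranch

section EulerOperator

/-- The shifted Euler operator `a + x d/dx`, which describes differentiation after the power `x ^ a`
has been factored out: `(x ^ a * σ)' = x ^ (a - 1) * eulerOperator a σ`. -/
noncomputable def eulerOperator (a : ℝ) (σ : ℝ → ℝ) (x : ℝ) : ℝ :=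
  a * σ x + x * deriv σ x

variable {a x : ℝ} {σ : ℝ → ℝ}

theorem hasDerivAt_rpow_mul (hx : 0 < x) (hσ : DifferentiableAt ℝ σ x) :
    HasDerivAt (fun y => y ^ a * σ y) (x ^ (a - 1) * eulerOperator a σ x) x := by
  refine ((Real.hasDerivAt_rpow_const (Or.inl hx.ne')).mul hσ.hasDerivAt).congr_deriv ?_
  have hpow : x ^ a = x ^ (a - 1) * x := by rw [Real.rpow_sub_one hx.ne']; field_simp
  rw [hpow, eulerOperator]
  ring

theorem contDiffOn_eulerOperator {n : WithTop ℕ∞} {s : Set ℝ} (hs : IsOpen s)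
    (hσ : ContDiffOn ℝ (n + 1) σ s) : ContDiffOn ℝ n (eulerOperator a σ) s :=
  (contDiffOn_const.mul (hσ.of_le le_self_add)).add
    (contDiffOn_id.mul (hσ.deriv_of_isOpen hs le_rfl))

theorem tendsto_eulerOperator {l : Filter ℝ} (hσ : Tendsto σ l (𝓝 0))
    (hσ' : Tendsto (fun x => x * deriv σ x) l (𝓝 0)) :
    Tendsto (eulerOperator a σ) l (𝓝 0) := by
  simpa only [mul_zero, add_zero] using! (hσ.const_mul a).add hσ'

theorem mul_deriv_eulerOperator (hσ : DifferentiableAt ℝ σ x)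
    (hσ' : DifferentiableAt ℝ (deriv σ) x) :
    x * deriv (eulerOperator a σ) x = (a + 1) * (x * deriv σ x) + x ^ 2 * deriv (deriv σ) x := by
  have h : HasDerivAt (eulerOperator a σ)
      (a * deriv σ x + (1 * deriv σ x + x * deriv (deriv σ) x)) x :=
    (hσ.hasDerivAt.const_mul a).add ((hasDerivAt_id x).mul hσ'.hasDerivAt)
  rw [h.deriv]
  ring

end EulerOperator

namespace IsHolland

variable {γ : ℝ} {ρ f : ℝ → ℝ} (hf : IsHolland γ ρ f)
include hf

theorem contDiffOn_eulerOperator_rho (a : ℝ) : ContDiffOn ℝ 1 (eulerOperator a ρ) (Ioo 0 1) :=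
  contDiffOn_eulerOperator isOpen_Ioo (by simpa only [one_add_one_eq_two] using hf.smooth)

theorem continuousOn_eulerOperator_eulerOperator (a b : ℝ) :
    ContinuousOn (eulerOperator b (eulerOperator a ρ)) (Ioo 0 1) :=
  (contDiffOn_eulerOperator (n := 0) isOpen_Ioo
    (by simpa only [zero_add] using hf.contDiffOn_eulerOperator_rho a)).continuousOn

theorem eventually_rho_ne_zero : ∀ᶠ x in 𝓝[>] (0 : ℝ), ρ x ≠ 0 :=
  eventually_of_mem (Ioo_mem_nhdsGT one_pos) fun x hx => (hf.rho_pos x hx).ne'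

theorem tendsto_zero_of_tendsto_div_rho {g : ℝ → ℝ}
    (hg : Tendsto (fun x => g x / ρ x) (𝓝[>] 0) (𝓝 0)) : Tendsto g (𝓝[>] 0) (𝓝 0) :=
  (Asymptotics.isLittleO_of_tendsto'
    (hf.eventually_rho_ne_zero.mono fun _ hne h0 => absurd h0 hne) hg).trans_tendsto hf.rho_zero

theorem tendsto_eulerOperator_eulerOperator (a b : ℝ) :
    Tendsto (eulerOperator b (eulerOperator a ρ)) (𝓝[>] 0) (𝓝 0) := by
  have h1 := hf.tendsto_zero_of_tendsto_div_rho hf.deriv_small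
  have h2 := hf.tendsto_zero_of_tendsto_div_rho hf.deriv2_small
  refine tendsto_eulerOperator (tendsto_eulerOperator hf.rho_zero h1) ?_
  have hsum := (h1.const_mul (a + 1)).add h2
  rw [mul_zero, add_zero] at hsum
  refine hsum.congr' (eventually_of_mem (Ioo_mem_nhdsGT one_pos) fun x hx => ?_)
  have hx' := isOpen_Ioo.mem_nhds hx
  exact (mul_deriv_eulerOperator ((hf.smooth.differentiableOn two_ne_zero).differentiableAt hx')
    (((hf.smooth.deriv_of_isOpen isOpen_Ioo one_add_one_eq_two.le).differentiableOn
      one_ne_zero).differentiableAt hx')).symm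

theorem hasDerivAt_of_mem_Ioo {x : ℝ} (hx : x ∈ Ioo (0 : ℝ) (1 / 2)) :
    HasDerivAt f (1 + x ^ γ * eulerOperator (1 + γ) ρ x) x := by
  have hx1 : x ∈ Ioo (0 : ℝ) 1 := ⟨hx.1, hx.2.trans one_half_lt_one⟩
  have hρ : DifferentiableAt ℝ ρ x :=
    (hf.smooth.differentiableOn two_ne_zero).differentiableAt (isOpen_Ioo.mem_nhds hx1)
  have hbranch := (hasDerivAt_id x).add (hasDerivAt_rpow_mul (a := 1 + γ) hx.1 hρ)
  rw [add_sub_cancel_left] at hbranch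
  refine hbranch.congr_of_eventuallyEq ?_
  filter_upwards [isOpen_Ioo.mem_nhds hx] with y hy
  rw [hf.eq_left y (Ioo_subset_Icc_self hy), Pi.add_apply, id, Real.rpow_add hy.1, Real.rpow_one]
  ring

theorem hasDerivAt_deriv {x : ℝ} (hx : x ∈ Ioo (0 : ℝ) (1 / 2)) :
    HasDerivAt (deriv f) (x ^ (γ - 1) * eulerOperator γ (eulerOperator (1 + γ) ρ) x) x := by
  have hx1 : x ∈ Ioo (0 : ℝ) 1 := ⟨hx.1, hx.2.trans one_half_lt_one⟩
  have hσ : DifferentiableAt ℝ (eulerOperator (1 + γ) ρ) x :=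
    ((hf.contDiffOn_eulerOperator_rho _).differentiableOn one_ne_zero).differentiableAt
      (isOpen_Ioo.mem_nhds hx1)
  refine ((hasDerivAt_rpow_mul hx.1 hσ).const_add 1).congr_of_eventuallyEq ?_
  filter_upwards [isOpen_Ioo.mem_nhds hx] with y hy
  exact (hf.hasDerivAt_of_mem_Ioo hy).deriv

theorem one_lt_deriv {x : ℝ} (hx : x ∈ Ioo (0 : ℝ) (1 / 2)) : 1 < deriv f x :=
  hf.expanding x ⟨hx.1, hx.2.trans one_half_lt_one⟩ hx.2.ne

theorem exists_norm_eulerOperator_eulerOperator_le (a b : ℝ) :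
    ∃ M, ∀ x ∈ Ioo (0 : ℝ) (1 / 2), ‖eulerOperator b (eulerOperator a ρ) x‖ ≤ M := by
  have hcont := hf.continuousOn_eulerOperator_eulerOperator a b
  have hhalf : ContinuousAt (eulerOperator b (eulerOperator a ρ)) (1 / 2) :=
    hcont.continuousAt (Ioo_mem_nhds one_half_pos one_half_lt_one)
  exact exists_norm_le_of_continuousOn_Ioo
    (hcont.mono (Ioo_subset_Ioo_right one_half_lt_one.le))
    (hf.tendsto_eulerOperator_eulerOperator a b) (hhalf.tendsto.mono_left nhdsWithin_le_nhds)

theorem boundedVariationOn_log_deriv :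
    BoundedVariationOn (fun x => Real.log (deriv f x)) (Ioo 0 (1 / 2)) := by
  obtain ⟨M, hM⟩ := hf.exists_norm_eulerOperator_eulerOperator_le (1 + γ) γ
  refine boundedVariationOn_of_norm_deriv_le_mul_rpow (M := M) hf.gamma_pos
    (fun x hx => (hf.hasDerivAt_deriv hx).log (one_pos.trans (hf.one_lt_deriv hx)).ne')
    fun x hx => ?_
  have hpow : 0 ≤ x ^ (γ - 1) := Real.rpow_nonneg hx.1.le _
  have hD := hf.one_lt_deriv hx
  calc ‖x ^ (γ - 1) * eulerOperator γ (eulerOperator (1 + γ) ρ) x / deriv f x‖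
      ≤ ‖x ^ (γ - 1) * eulerOperator γ (eulerOperator (1 + γ) ρ) x‖ := by
        rw [norm_div]
        exact div_le_self (norm_nonneg _) (hD.le.trans (le_abs_self _))
    _ = x ^ (γ - 1) * ‖eulerOperator γ (eulerOperator (1 + γ) ρ) x‖ := by
        rw [norm_mul, Real.norm_of_nonneg hpow]
    _ ≤ x ^ (γ - 1) * M := mul_le_mul_of_nonneg_left (hM x hx) hpow
    _ = M * x ^ (γ - 1) := mul_comm _ _

theorem lt_apply {x : ℝ} (hx : x ∈ Ioo (0 : ℝ) (1 / 2)) : x < f x := by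
  rw [hf.eq_left x (Ioo_subset_Icc_self hx)]
  exact lt_mul_of_one_lt_right hx.1 (lt_add_of_pos_right 1 (mul_pos (Real.rpow_pos_of_pos hx.1 γ)
    (hf.rho_pos x ⟨hx.1, hx.2.trans one_half_lt_one⟩)))

theorem exists_distortion_const_inverseBranch {v : ℝ → ℝ}
    (hv : ∀ x ∈ Ioo (0 : ℝ) 1, v x ∈ Ioo (0 : ℝ) (1 / 2) ∧ f (v x) = x) :
    ∃ C : ℝ, 1 ≤ C ∧ ∀ c ∈ Ioo (0 : ℝ) 1, v c < c ∧ ∀ n : ℕ, ∀ x ∈ Icc (v c) c,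
      C⁻¹ * ((v^[n] c - v^[n + 1] c) / (c - v c)) ≤ deriv v^[n] x ∧
        deriv v^[n] x ≤ C * ((v^[n] c - v^[n + 1] c) / (c - v c)) := by
  have hmaps : MapsTo v (Ioo 0 1) (Ioo 0 (1 / 2)) := fun x hx => (hv x hx).1
  have hinv : LeftInvOn f v (Ioo 0 1) := fun x hx => (hv x hx).2
  have hpos : ∀ x ∈ Ioo (0 : ℝ) (1 / 2), 0 < deriv f x := fun x hx =>
    one_pos.trans (hf.one_lt_deriv hx)
  have hpos_v : ∀ x ∈ Ioo (0 : ℝ) 1, 0 < deriv v x := fun x hx => by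
    rw [(hasDerivAt_of_leftInvOn isOpen_Ioo ordConnected_Ioo isOpen_Ioo hpos hmaps hinv hx).deriv]
    exact inv_pos.2 (hpos _ (hmaps hx))
  obtain ⟨C, hC, hdist⟩ := exists_distortion_const ordConnected_Ioo
    (hmaps.mono_right (Ioo_subset_Ioo_right one_half_lt_one.le)) hpos_v
    (boundedVariationOn_log_deriv_of_leftInvOn isOpen_Ioo ordConnected_Ioo isOpen_Ioo hpos hmaps
      hinv hf.boundedVariationOn_log_deriv)
  have hlt {c : ℝ} (hc : c ∈ Ioo (0 : ℝ) 1) : v c < c :=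
    (hf.lt_apply (hmaps hc)).trans_eq (hinv hc)
  exact ⟨C, hC, fun c hc => ⟨hlt hc, hdist c hc (hlt hc)⟩⟩

end IsHolland

theorem statement19_general {γ : ℝ} {ρ f v0 : ℝ → ℝ} (hf : IsHolland γ ρ f)
    (hv0 : ∀ x ∈ Ioo (0 : ℝ) 1, v0 x ∈ Ioo (0 : ℝ) (1 / 2) ∧ f (v0 x) = x) {z : ℕ → ℝ}
    (hz1 : z 1 ∈ Ioo (0 : ℝ) 1) (hzrec : ∀ n : ℕ, 1 ≤ n → z (n + 1) = v0 (z n)) :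
    ∃ C : ℝ, 1 ≤ C ∧ ∀ n k : ℕ, 1 ≤ k → ∀ x ∈ Ioc (z (k + 1)) (z k),
      C⁻¹ * ((volume (Ioc (z (n + k + 1)) (z (n + k)))).toReal
          / (volume (Ioc (z (k + 1)) (z k))).toReal) ≤ deriv v0^[n] x ∧
      deriv v0^[n] x ≤ C * ((volume (Ioc (z (n + k + 1)) (z (n + k)))).toReal
          / (volume (Ioc (z (k + 1)) (z k))).toReal) := by
  obtain ⟨C, hC, hdist⟩ := hf.exists_distortion_const_inverseBranch hv0
  have hmaps : MapsTo v0 (Ioo 0 1) (Ioo 0 1) := fun x hx =>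
    Ioo_subset_Ioo_right one_half_lt_one.le (hv0 x hx).1
  have hz (k : ℕ) (hk : 1 ≤ k) : z k ∈ Ioo 0 1 := by
    simpa only [iterate_apply_of_rec hzrec le_rfl, Nat.sub_add_cancel hk] using
      hmaps.iterate (k - 1) hz1
  have hlength (k : ℕ) (hk : 1 ≤ k) :
      (volume (Ioc (z (k + 1)) (z k))).toReal = z k - z (k + 1) := by
    rw [hzrec k hk]
    exact Real.volume_real_Ioc_of_le (hdist _ (hz k hk)).1.le
  refine ⟨C, hC, fun n k hk x hx => ?_⟩
  rw [hlength k hk, hlength (n + k) (hk.trans (Nat.le_add_left k n)), Nat.add_right_comm,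
    ← iterate_apply_of_rec hzrec hk n, ← iterate_apply_of_rec hzrec hk (n + 1), hzrec k hk]
  rw [hzrec k hk] at hx
  exact (hdist _ (hz k hk)).2 n x (Ioc_subset_Icc_self hx)

theorem statement19
    (γ : ℝ) (ρ : ℝ → ℝ) (f : ℝ → ℝ) (hγ0 : 0 < γ) (hγ1 : γ < 1)
    (hf : IsHolland γ ρ f)
    (v0 : ℝ → ℝ)
    (hv0 : ∀ x ∈ Set.Ioo (0:ℝ) 1, v0 x ∈ Set.Ioo (0:ℝ) (1/2) ∧ f (v0 x) = x)
    (z : ℕ → ℝ) (hz0 : z 0 = 1) (hz1 : z 1 = 1/2)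
    (hzrec : ∀ n : ℕ, 1 ≤ n → z (n + 1) = v0 (z n)) :
    ∃ C : ℝ, 1 ≤ C ∧ ∀ n k : ℕ, 1 ≤ k → ∀ x ∈ Set.Ioc (z (k + 1)) (z k),
      C⁻¹ * ((MeasureTheory.volume (Set.Ioc (z (n + k + 1)) (z (n + k)))).toReal
          / (MeasureTheory.volume (Set.Ioc (z (k + 1)) (z k))).toReal)
        ≤ deriv (v0^[n]) x ∧
      deriv (v0^[n]) x
        ≤ C * ((MeasureTheory.volume (Set.Ioc (z (n + k + 1)) (z (n + k)))).toReal
          / (MeasureTheory.volume (Set.Ioc (z (k + 1)) (z k))).toReal) := by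
  exact statement19_general hf hv0 (by norm_num [hz1]) hzrec
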